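/- arXiv:1404.5489 — 3 statements merged into one kernel-verified Lean document; each statement's English description precedes it below -/
import Mathlib

section
/- Let B be a finite set of monomials in R[x]. The linear span ⟨B⟩ is connected to 1 if and only if 1 ∈ B and every monomial m ∈ B with m ≠ 1 can be written m = x_{i₀}·m' for some index i₀ ∈ {1,…,n} and some monomial m' ∈ B. -/
open MvPolynomial

noncomputable section

/-- `R[x] = ℝ[x₁,…,xₙ]`. -/
abbrev PolyR (n : ℕ) := MvPolynomial (Fin n) ℝ

/-- `span(E·E)`, the linear span of products of pairs of elements of `E`. -/
def spanEE {n : ℕ} (E : Submodule ℝ (PolyR n)) : Submodule ℝ (PolyR n) :=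
  Submodule.span ℝ (Set.image2 (· * ·) (E : Set (PolyR n)) (E : Set (PolyR n)))

lemma mul_mem_spanEE {n : ℕ} {E : Submodule ℝ (PolyR n)} :
    ∀ p q : PolyR n, p ∈ E → q ∈ E → p * q ∈ spanEE E :=
  fun _ _ hp hq => Submodule.subset_span (Set.mem_image2_of_mem hp hq)

lemma spanEE_mono {n : ℕ} {E E' : Submodule ℝ (PolyR n)} (h : E ≤ E') :
    spanEE E ≤ spanEE E' :=
  Submodule.span_mono (Set.image2_subset h h)

/-- Finite sums of squares of elements of `E`. -/
def SoS {n : ℕ} (E : Submodule ℝ (PolyR n)) : Set (PolyR n) :=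
  (AddSubmonoid.closure ((fun q => q ^ 2) '' (E : Set (PolyR n))) : Set (PolyR n))

/-- The truncated quadratic module `Q_{E,G}` for the constraints `G = (G0, G1)`. -/
def QMod {n : ℕ} (E : Submodule ℝ (PolyR n)) (G0 G1 : Set (PolyR n)) : Set (PolyR n) :=
  { p | ∃ (s0 s1 : Finset (PolyR n)) (h h' : PolyR n → PolyR n),
      ↑s0 ⊆ G0 ∧ ↑s1 ⊆ G1 ∧
      (∀ g ∈ s0, h g ∈ E ∧ g * h g ∈ spanEE E) ∧
      (∀ g ∈ s1, h' g ∈ SoS E ∧ g * h' g ∈ spanEE E) ∧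
      p = (∑ g ∈ s0, g * h g) + ∑ g ∈ s1, g * h' g }

/-- The dual convex set `L_{E,G}` of linear forms on `span(E·E)`. -/
def LSet {n : ℕ} (E : Submodule ℝ (PolyR n)) (G0 G1 : Set (PolyR n)) :
    Set (↥(spanEE E) →ₗ[ℝ] ℝ) :=
  { Λ | (∀ q : ↥(spanEE E), (q : PolyR n) ∈ QMod E G0 G1 → 0 ≤ Λ q) ∧
        ∀ q : ↥(spanEE E), (q : PolyR n) = 1 → Λ q = 1 }

/-- `f^μ_{E,G}`, as an extended real (so that it is `+∞` when `L_{E,G} = ∅`). -/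
def fmu {n : ℕ} (E : Submodule ℝ (PolyR n)) (G0 G1 : Set (PolyR n))
    (f : ↥(spanEE E)) : EReal :=
  sInf ((fun Λ : ↥(spanEE E) →ₗ[ℝ] ℝ => ((Λ f : ℝ) : EReal)) '' LSet E G0 G1)

/-- `f^sos_{E,G}`, as an extended real (so that it is `-∞` when the set is empty). -/
def fsos {n : ℕ} (E : Submodule ℝ (PolyR n)) (G0 G1 : Set (PolyR n)) (f : PolyR n) : EReal :=
  sSup ((fun γ : ℝ => (γ : EReal)) '' { γ : ℝ | f - C γ ∈ QMod E G0 G1 })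

/-- The basic semialgebraic set `S(G)`. -/
def SemiSet {n : ℕ} (G0 G1 : Set (PolyR n)) : Set (Fin n → ℝ) :=
  { x | (∀ g ∈ G0, eval x g = 0) ∧ ∀ g ∈ G1, 0 ≤ eval x g }

/-- The truncated Hankel operator `H_Λ^E : E → E*`, `H_Λ^E(p)(q) = Λ(pq)`, for a linear
form `Λ` defined on a space `W` containing all products of pairs of elements of `E`. -/
def Hankel {n : ℕ} (W E : Submodule ℝ (PolyR n)) (Λ : ↥W →ₗ[ℝ] ℝ)
    (h : ∀ p q : PolyR n, p ∈ E → q ∈ E → p * q ∈ W) :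
    ↥E →ₗ[ℝ] Module.Dual ℝ ↥E :=
  LinearMap.mk₂ ℝ (fun p q : ↥E => Λ ⟨(p : PolyR n) * q, h _ _ p.2 q.2⟩)
    (fun p p' q => by
      rw [← map_add]; exact congrArg Λ (Subtype.ext (by simp [add_mul])))
    (fun c p q => by
      rw [← map_smul]; exact congrArg Λ (Subtype.ext (by simp [smul_mul_assoc])))
    (fun p q q' => by
      rw [← map_add]; exact congrArg Λ (Subtype.ext (by simp [mul_add])))
    (fun c p q => by
      rw [← map_smul]; exact congrArg Λ (Subtype.ext (by simp [mul_smul_comm])))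

/-- The kernel of the truncated Hankel operator, as a subspace of `R[x]`. -/
def HKer {n : ℕ} (W E : Submodule ℝ (PolyR n)) (Λ : ↥W →ₗ[ℝ] ℝ)
    (h : ∀ p q : PolyR n, p ∈ E → q ∈ E → p * q ∈ W) : Submodule ℝ (PolyR n) :=
  (LinearMap.ker (Hankel W E Λ h)).map E.subtype

/-- The rank of the truncated Hankel operator. -/
def HRank {n : ℕ} (W E : Submodule ℝ (PolyR n)) (Λ : ↥W →ₗ[ℝ] ℝ)
    (h : ∀ p q : PolyR n, p ∈ E → q ∈ E → p * q ∈ W) : Cardinal :=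
  Module.rank ℝ ↥(LinearMap.range (Hankel W E Λ h))

/-- The full Hankel operator `H_Λ : R[x] → R[x]*` of a linear form on `R[x]`. -/
def FullHankel {n : ℕ} (Λ : PolyR n →ₗ[ℝ] ℝ) :
    PolyR n →ₗ[ℝ] Module.Dual ℝ (PolyR n) :=
  LinearMap.compr₂ (LinearMap.mul ℝ (PolyR n)) Λ

/-- The prolongation `E⁺ = E + x₁E + … + xₙE`. -/
def prolong {n : ℕ} (E : Submodule ℝ (PolyR n)) : Submodule ℝ (PolyR n) :=
  E ⊔ ⨆ i : Fin n, Submodule.map (LinearMap.mulLeft ℝ (X i : PolyR n)) E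

/-- A subspace `E` is connected to 1. -/
def ConnectedTo1 {n : ℕ} (E : Submodule ℝ (PolyR n)) : Prop :=
  (1 : PolyR n) ∈ E ∧ ∃ (k : ℕ) (c : ℕ → Submodule ℝ (PolyR n)),
    c 0 = Submodule.span ℝ {1} ∧ c k = E ∧
    ∀ i < k, c i ≤ c (i + 1) ∧ c (i + 1) ≤ prolong (c i)

/-- Degree `|α|` of an exponent vector. -/
def degOf {n : ℕ} (α : Fin n →₀ ℕ) : ℕ := α.sum fun _ e => e

/-- `B⁺ = B ∪ x₁B ∪ … ∪ xₙB` for a set of monomials (exponent vectors). -/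
def Bplus {n : ℕ} (B : Set (Fin n →₀ ℕ)) : Set (Fin n →₀ ℕ) :=
  B ∪ ⋃ i : Fin n, (fun α => α + Finsupp.single i 1) '' B

/-- The border `∂B = B⁺ \ B`. -/
def BBorder {n : ℕ} (B : Set (Fin n →₀ ℕ)) : Set (Fin n →₀ ℕ) :=
  Bplus B \ B

/-- A set of monomials connected to 1. -/
def MonConnectedTo1 {n : ℕ} (B : Set (Fin n →₀ ℕ)) : Prop :=
  0 ∈ B ∧ ∀ α ∈ B, α ≠ 0 → ∃ i : Fin n, ∃ β ∈ B, α = β + Finsupp.single i 1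

/-- `⟨B⟩_t`: the span of the monomials of `B` of degree at most `t`. -/
def spanB {n : ℕ} (B : Set (Fin n →₀ ℕ)) (t : ℕ) : Submodule ℝ (PolyR n) :=
  Submodule.span ℝ ((fun α => (monomial α (1 : ℝ) : PolyR n)) '' { α ∈ B | degOf α ≤ t })

/-- `⟨F|t⟩`: the span of `{ x^α f : f ∈ F, deg f ≤ t, |α| ≤ t − deg f }`. -/
def FSpan {n : ℕ} (F : Finset (PolyR n)) (t : ℕ) : Submodule ℝ (PolyR n) :=
  Submodule.span ℝ { p : PolyR n | ∃ f ∈ F, ∃ α : Fin n →₀ ℕ,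
    f.totalDegree ≤ t ∧ degOf α + f.totalDegree ≤ t ∧ p = monomial α (1 : ℝ) * f }

/-- `F` is a border basis for `B` in degree `t`. -/
def IsBorderBasis {n : ℕ} (B : Set (Fin n →₀ ℕ)) (F : Finset (PolyR n)) (t : ℕ) : Prop :=
  (∀ f ∈ F, f.totalDegree ≤ t →
      ((↑f.support : Set (Fin n →₀ ℕ)) ⊆ Bplus B ∧
       (∃! α, α ∈ f.support ∧ α ∈ BBorder B) ∧
       ∀ α ∈ f.support, α ∈ BBorder B → coeff α f = 1)) ∧
  (∀ f ∈ F, f.totalDegree ≤ t → ∀ f' ∈ F, f'.totalDegree ≤ t →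
      ∀ α, (α ∈ f.support ∧ α ∈ BBorder B) → (α ∈ f'.support ∧ α ∈ BBorder B) → f = f') ∧
  (∀ α ∈ BBorder B, degOf α ≤ t → ∃ f ∈ F, f.totalDegree ≤ t ∧ α ∈ f.support) ∧
  Disjoint (spanB B t) (FSpan F t) ∧
  spanB B t ⊔ FSpan F t = restrictTotalDegree (Fin n) ℝ t

/-- `F` is a graded border basis for `B` in degree `t`. -/
def IsGradedBorderBasis {n : ℕ} (B : Set (Fin n →₀ ℕ)) (F : Finset (PolyR n)) (t : ℕ) : Prop :=
  IsBorderBasis B F t ∧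
  ∀ f ∈ F, ∀ α ∈ f.support, α ∈ BBorder B → degOf α = f.totalDegree

lemma mul_mem_rtd {n t : ℕ} :
    ∀ p q : PolyR n, p ∈ restrictTotalDegree (Fin n) ℝ t →
      q ∈ restrictTotalDegree (Fin n) ℝ t →
      p * q ∈ restrictTotalDegree (Fin n) ℝ (2 * t) := by
  intro p q hp hq
  rw [mem_restrictTotalDegree] at hp hq ⊢
  calc (p * q).totalDegree ≤ p.totalDegree + q.totalDegree := totalDegree_mul p q
    _ ≤ t + t := add_le_add hp hq
    _ = 2 * t := (two_mul t).symm

lemma spanB_le {n : ℕ} (B : Set (Fin n →₀ ℕ)) (t : ℕ) :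
    spanB B t ≤ restrictTotalDegree (Fin n) ℝ t := by
  rw [spanB, Submodule.span_le]
  rintro p ⟨α, hα, rfl⟩
  rw [SetLike.mem_coe, mem_restrictTotalDegree]
  exact le_of_eq_of_le (totalDegree_monomial α one_ne_zero) hα.2

/-- The vanishing ideal of a finite family of points. -/
def vanishingIdeal {n r : ℕ} (ξ : Fin r → (Fin n → ℝ)) : Ideal (PolyR n) where
  carrier := { p : PolyR n | ∀ i, eval (ξ i) p = 0 }
  add_mem' := by
    intro a b ha hb i
    simp [ha i, hb i]
  zero_mem' := by intro i; simp
  smul_mem' := by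
    intro c p hp i
    simp [smul_eq_mul, hp i]


/-!
Along a chain from `⟨1⟩` to `E` every member lies in `E`, so each prolongation only adds elements
of `x₁E + … + xₙE`; hence a space connected to 1 satisfies `E ≤ ⟨1⟩ + x₁E + … + xₙE`. On spans of
monomials, sums and multiplication by variables are operations on the sets of exponents, so for
`E = ⟨A⟩` this inclusion says that every nonzero exponent in `A` has a predecessor in `A`.
Conversely, if every nonzero exponent has a predecessor, then the truncations of `⟨A⟩` by degree
form a chain, which reaches `⟨A⟩` as soon as `A` is finite; and only finite `A` can occur, because
prolongation preserves finite dimension.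
-/

section RestrictSupport

variable {σ R : Type*} [CommSemiring R]

lemma restrictSupport_le_restrictSupport_iff [Nontrivial R] {A A' : Set (σ →₀ ℕ)} :
    restrictSupport R A ≤ restrictSupport R A' ↔ A ⊆ A' := by
  refine ⟨fun h α hα => ?_, restrictSupport_mono R⟩
  have hmem : monomial α (1 : R) ∈ restrictSupport R A' :=
    h ((monomial_mem_restrictSupport R).2 (Or.inl hα))
  exact ((monomial_mem_restrictSupport R).1 hmem).resolve_right one_ne_zero

lemma restrictSupport_union (A A' : Set (σ →₀ ℕ)) :
    restrictSupport R (A ∪ A') = restrictSupport R A ⊔ restrictSupport R A' := by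
  simp only [restrictSupport_eq_span, Set.image_union, Submodule.span_union]

lemma restrictSupport_iUnion {ι : Sort*} (A : ι → Set (σ →₀ ℕ)) :
    restrictSupport R (⋃ i, A i) = ⨆ i, restrictSupport R (A i) := by
  simp only [restrictSupport_eq_span, Set.image_iUnion, Submodule.span_iUnion]

lemma span_one_eq_restrictSupport :
    Submodule.span R {(1 : MvPolynomial σ R)} = restrictSupport R {0} := by
  rw [restrictSupport_eq_span, Set.image_singleton]
  rfl

lemma map_mulLeft_X_restrictSupport (i : σ) (A : Set (σ →₀ ℕ)) :
    (restrictSupport R A).map (LinearMap.mulLeft R (X i)) =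
      restrictSupport R ((· + Finsupp.single i 1) '' A) := by
  simp only [restrictSupport_eq_span, Submodule.map_span, Set.image_image,
    LinearMap.mulLeft_apply, X, monomial_mul, one_mul, add_comm]

lemma iSup_map_mulLeft_X_restrictSupport (A : Set (σ →₀ ℕ)) :
    ⨆ i, (restrictSupport R A).map (LinearMap.mulLeft R (X i)) =
      restrictSupport R (⋃ i, (· + Finsupp.single i 1) '' A) := by
  simp only [map_mulLeft_X_restrictSupport, restrictSupport_iUnion]

lemma finite_of_fg_restrictSupport [Nontrivial R] {A : Set (σ →₀ ℕ)}
    (h : (restrictSupport R A).FG) : A.Finite :=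
  have : Module.Finite R (restrictSupport R A) := Module.Finite.iff_fg.2 h
  Set.finite_coe_iff.1 (Module.Finite.finite_basis (basisRestrictSupport R A))

end RestrictSupport

section MonomialSpan

variable {n : ℕ} {E : Submodule ℝ (PolyR n)} {A : Set (Fin n →₀ ℕ)}

lemma prolong_restrictSupport (A : Set (Fin n →₀ ℕ)) :
    prolong (restrictSupport ℝ A) = restrictSupport ℝ (Bplus A) := by
  rw [prolong, iSup_map_mulLeft_X_restrictSupport, ← restrictSupport_union, Bplus]

lemma fg_prolong (hE : E.FG) : (prolong E).FG :=
  hE.sup (Submodule.fg_iSup _ fun _ => hE.map _)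

namespace ConnectedTo1

lemma fg (hE : ConnectedTo1 E) : E.FG := by
  obtain ⟨-, k, c, h0, rfl, hc⟩ := hE
  suffices h : ∀ i ≤ k, (c i).FG from h k le_rfl
  intro i
  induction i with
  | zero => exact fun _ => h0 ▸ Submodule.fg_span_singleton 1
  | succ i ih =>
    intro hi
    have : IsNoetherian ℝ (prolong (c i)) :=
      isNoetherian_of_fg_of_noetherian _ (fg_prolong (ih (Nat.le_of_succ_le hi)))
    exact Submodule.FG.of_le_of_isNoetherian (hc i hi).2

lemma le_span_one_sup (hE : ConnectedTo1 E) :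
    E ≤ Submodule.span ℝ {1} ⊔ ⨆ i, E.map (LinearMap.mulLeft ℝ (X i)) := by
  obtain ⟨-, k, c, h0, rfl, hc⟩ := hE
  have le_last : ∀ i ≤ k, c i ≤ c k := fun i hi =>
    Nat.decreasingInduction (motive := fun j _ => c j ≤ c k)
      (fun j hj ih => (hc j hj).1.trans ih) le_rfl hi
  suffices h : ∀ i ≤ k, c i ≤ Submodule.span ℝ {1} ⊔ ⨆ j, (c k).map (LinearMap.mulLeft ℝ (X j))
    from h k le_rfl
  intro i
  induction i with
  | zero => exact fun _ => h0.le.trans le_sup_left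
  | succ i ih =>
    intro hi
    have hik : i ≤ k := Nat.le_of_succ_le hi
    calc c (i + 1) ≤ c i ⊔ ⨆ j, (c i).map (LinearMap.mulLeft ℝ (X j)) := (hc i hi).2
      _ ≤ _ := sup_le (ih hik)
        (le_sup_of_le_right (iSup_mono fun _ => Submodule.map_mono (le_last i hik)))

lemma monConnectedTo1 (h : ConnectedTo1 (restrictSupport ℝ A)) : MonConnectedTo1 A := by
  have h0 : ({0} : Set (Fin n →₀ ℕ)) ⊆ A := by
    rw [← restrictSupport_le_restrictSupport_iff (R := ℝ), ← span_one_eq_restrictSupport,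
      Submodule.span_singleton_le_iff_mem]
    exact h.1
  have hA : A ⊆ {0} ∪ ⋃ i, (· + Finsupp.single i 1) '' A := by
    rw [← restrictSupport_le_restrictSupport_iff (R := ℝ), restrictSupport_union,
      ← span_one_eq_restrictSupport, ← iSup_map_mulLeft_X_restrictSupport]
    exact h.le_span_one_sup
  refine ⟨h0 rfl, fun α hα hα0 => ?_⟩
  obtain ⟨i, β, hβ, rfl⟩ := Set.mem_iUnion.1 ((hA hα).resolve_left hα0)
  exact ⟨i, β, hβ, rfl⟩

end ConnectedTo1

namespace MonConnectedTo1

lemma sep_degree_le_zero (hA : MonConnectedTo1 A) : {α ∈ A | α.degree ≤ 0} = {0} := by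
  ext α
  simp only [Set.mem_ofPred_eq, Nat.le_zero, Finsupp.degree_eq_zero_iff, Set.mem_singleton_iff]
  exact ⟨And.right, fun h => ⟨h ▸ hA.1, h⟩⟩

lemma sep_degree_le_succ_subset_bplus (hA : MonConnectedTo1 A) (t : ℕ) :
    {α ∈ A | α.degree ≤ t + 1} ⊆ Bplus {α ∈ A | α.degree ≤ t} := by
  rintro α ⟨hα, hdeg⟩
  obtain rfl | hα0 := eq_or_ne α 0
  · exact Or.inl ⟨hα, by simp only [map_zero, zero_le]⟩
  obtain ⟨i, β, hβ, rfl⟩ := hA.2 α hα hα0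
  rw [map_add, Finsupp.degree_single, Nat.add_le_add_iff_right] at hdeg
  exact Or.inr (Set.mem_iUnion.2 ⟨i, β, ⟨hβ, hdeg⟩, rfl⟩)

lemma connectedTo1_restrictSupport (hA : MonConnectedTo1 A) (hfin : A.Finite) :
    ConnectedTo1 (restrictSupport ℝ A) := by
  obtain ⟨k, hk⟩ := (hfin.image Finsupp.degree).bddAbove
  refine ⟨(monomial_mem_restrictSupport ℝ).2 (Or.inl hA.1), k,
    fun t => restrictSupport ℝ {α ∈ A | α.degree ≤ t}, ?_, ?_, fun t _ => ⟨?_, ?_⟩⟩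
  · exact (congrArg _ hA.sep_degree_le_zero).trans span_one_eq_restrictSupport.symm
  · exact congrArg _ (Set.sep_eq_self_iff_mem_true.2 fun _ hα => hk (Set.mem_image_of_mem _ hα))
  · exact restrictSupport_mono ℝ fun _ hα => ⟨hα.1, Nat.le_succ_of_le hα.2⟩
  · rw [prolong_restrictSupport]
    exact restrictSupport_mono ℝ (hA.sep_degree_le_succ_subset_bplus t)

end MonConnectedTo1

theorem connectedTo1_restrictSupport_iff :
    ConnectedTo1 (restrictSupport ℝ A) ↔ A.Finite ∧ MonConnectedTo1 A :=
  ⟨fun h => ⟨finite_of_fg_restrictSupport h.fg, h.monConnectedTo1⟩,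
    fun h => h.2.connectedTo1_restrictSupport h.1⟩

lemma monConnectedTo1_iff_image_monomial :
    MonConnectedTo1 A ↔ (1 : PolyR n) ∈ (monomial · (1 : ℝ)) '' A ∧
      ∀ m ∈ (monomial · (1 : ℝ)) '' A, m ≠ 1 →
        ∃ i : Fin n, ∃ m' ∈ (monomial · (1 : ℝ)) '' A, m = X i * m' := by
  have hinj : Function.Injective fun α : Fin n →₀ ℕ => (monomial α (1 : ℝ) : PolyR n) :=
    monomial_left_injective one_ne_zero
  have hone : (1 : PolyR n) = monomial 0 1 := rfl
  have hX (i : Fin n) (β : Fin n →₀ ℕ) :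
      (X i * monomial β 1 : PolyR n) = monomial (β + Finsupp.single i 1) 1 := by
    rw [X, monomial_mul, one_mul, add_comm]
  simp only [MonConnectedTo1, hone, Set.forall_mem_image, Set.exists_mem_image, hX,
    hinj.mem_set_image, hinj.eq_iff, ne_eq]

end MonomialSpan

theorem statement_5_general {n : ℕ} (B : Set (PolyR n))
    (hB : ∀ m ∈ B, ∃ α : Fin n →₀ ℕ, m = monomial α 1) :
    ConnectedTo1 (Submodule.span ℝ B) ↔
      B.Finite ∧ (1 : PolyR n) ∈ B ∧
        ∀ m ∈ B, m ≠ 1 → ∃ i : Fin n, ∃ m' ∈ B, m = X i * m' := by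
  obtain ⟨A, rfl⟩ : ∃ A : Set (Fin n →₀ ℕ), (monomial · (1 : ℝ)) '' A = B :=
    Set.subset_range_iff_exists_image_eq.1 fun m hm => (hB m hm).imp fun _ h => h.symm
  rw [← restrictSupport_eq_span, connectedTo1_restrictSupport_iff,
    monConnectedTo1_iff_image_monomial,
    Set.finite_image_iff (monomial_left_injective one_ne_zero).injOn]

theorem statement_5 {n : ℕ} (B : Finset (PolyR n))
    (hB : ∀ m ∈ B, ∃ α : Fin n →₀ ℕ, m = monomial α 1) :
    ConnectedTo1 (Submodule.span ℝ (B : Set (PolyR n))) ↔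
      ((1 : PolyR n) ∈ B ∧
        ∀ m ∈ B, m ≠ 1 → ∃ i : Fin n, ∃ m' ∈ B, m = X i * m') := by
  simpa only [B.finite_toSet, true_and, Finset.mem_coe] using
    statement_5_general (B : Set (PolyR n)) hB

end
end

section
/- Let B be a set of monomials of R[x] connected to 1 and let F be a graded border basis for B in degree t. Then for every monomial m of degree ≤ t, the projection π_{B,F}(m) of m onto ⟨B⟩_t along ⟨F|t⟩ satisfies deg(π_{B,F}(m)) ≤ deg(m). -/
open MvPolynomial

noncomputable section

/-!
Modulo `⟨F|t⟩`, a polynomial of degree `d ≤ t` already reduces inside degree `d`: by induction,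
`R_d = ⟨B⟩_d + ⟨F|d⟩` for all `d ≤ t`. Indeed `R_{d+1}` is the prolongation of `R_d`, the
prolongation of `⟨F|d⟩` lies in `⟨F|d+1⟩`, and that of `⟨B⟩_d` lies in `⟨B⁺⟩_{d+1}`, whose border
monomials are rewritten by elements of `F`; gradedness says that such a rewriting does not raise the
degree. As `⟨B⟩_t ∩ ⟨F|t⟩ = 0`, the reduction found in degree `d` is the projection `π_{B,F}`.

The induction starts with `1 ∈ B`: no monomial of `∂B` is `1`, so if `1 ∉ B`, all polynomials of
`⟨B⟩_t + ⟨F|t⟩ = R_t` would vanish at the origin.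
-/

section Degree

variable {n : ℕ}

lemma degOf_eq_degree (α : Fin n →₀ ℕ) : degOf α = α.degree := rfl

lemma degOf_add_single (α : Fin n →₀ ℕ) (i : Fin n) :
    degOf (α + Finsupp.single i 1) = degOf α + 1 := by
  simp only [degOf_eq_degree, map_add, Finsupp.degree_single]

lemma exists_eq_add_single {σ : Type*} {α : σ →₀ ℕ} (hα : α ≠ 0) :
    ∃ (i : σ) (β : σ →₀ ℕ), α = β + Finsupp.single i 1 := by
  obtain ⟨i, hi⟩ := Finsupp.ne_iff.1 hα
  exact ⟨i, α - Finsupp.single i 1, (tsub_add_cancel_of_le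
    (Finsupp.single_le_iff.2 (Nat.one_le_iff_ne_zero.2 hi))).symm⟩

end Degree

section Prolong

variable {n : ℕ} {E E' W : Submodule ℝ (PolyR n)}

lemma prolong_le_iff : prolong E ≤ W ↔ E ≤ W ∧ ∀ i, ∀ p ∈ E, X i * p ∈ W := by
  simp only [prolong, sup_le_iff, iSup_le_iff, Submodule.map_le_iff_le_comap]
  rfl

lemma le_prolong (E : Submodule ℝ (PolyR n)) : E ≤ prolong E :=
  (prolong_le_iff.1 le_rfl).1

lemma X_mul_mem_prolong {p : PolyR n} (i : Fin n) (hp : p ∈ E) : X i * p ∈ prolong E :=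
  (prolong_le_iff.1 le_rfl).2 i p hp

lemma prolong_mono (h : E ≤ E') : prolong E ≤ prolong E' :=
  prolong_le_iff.2 ⟨h.trans (le_prolong E'), fun i _ hp => X_mul_mem_prolong i (h hp)⟩

lemma prolong_sup_le (E E' : Submodule ℝ (PolyR n)) :
    prolong (E ⊔ E') ≤ prolong E ⊔ prolong E' := by
  refine prolong_le_iff.2 ⟨sup_le_sup (le_prolong E) (le_prolong E'), fun i p hp => ?_⟩
  obtain ⟨q, hq, r, hr, rfl⟩ := Submodule.mem_sup.1 hp
  rw [mul_add]
  exact Submodule.add_mem_sup (X_mul_mem_prolong i hq) (X_mul_mem_prolong i hr)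

lemma prolong_span_le_iff {S : Set (PolyR n)} :
    prolong (Submodule.span ℝ S) ≤ W ↔ S ⊆ W ∧ ∀ i, ∀ p ∈ S, X i * p ∈ W := by
  refine prolong_le_iff.trans (and_congr Submodule.span_le (forall_congr' fun i => ?_))
  exact Submodule.span_le (p := W.comap (LinearMap.mulLeft ℝ (X i)))

lemma restrictTotalDegree_succ_le_prolong (n d : ℕ) :
    restrictTotalDegree (Fin n) ℝ (d + 1) ≤ prolong (restrictTotalDegree (Fin n) ℝ d) := by
  have monomial_mem {α : Fin n →₀ ℕ} (hα : degOf α ≤ d) :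
      monomial α (1 : ℝ) ∈ restrictTotalDegree (Fin n) ℝ d :=
    (monomial_mem_restrictSupport _).2 (Or.inl hα)
  rw [restrictTotalDegree, restrictSupport_eq_span, Submodule.span_le]
  rintro _ ⟨α, hα : degOf α ≤ d + 1, rfl⟩
  rcases eq_or_ne α 0 with rfl | hne
  · exact le_prolong _ (monomial_mem (Nat.zero_le d))
  · obtain ⟨i, β, rfl⟩ := exists_eq_add_single hne
    rw [degOf_add_single, Nat.add_le_add_iff_right] at hα
    simpa [monomial_add_single, mul_comm] using X_mul_mem_prolong i (monomial_mem hα)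

end Prolong

section Spans

variable {n d : ℕ} {B : Set (Fin n →₀ ℕ)} {F : Finset (PolyR n)}

lemma mem_spanB_iff {p : PolyR n} :
    p ∈ spanB B d ↔ ↑p.support ⊆ B ∧ p.totalDegree ≤ d := by
  rw [spanB, ← restrictSupport_eq_span, mem_restrictSupport_iff, totalDegree, Finset.sup_le_iff]
  exact Set.subset_inter_iff

lemma monomial_mem_spanB {α : Fin n →₀ ℕ} (hα : α ∈ B) (hd : degOf α ≤ d) :
    monomial α (1 : ℝ) ∈ spanB B d :=
  Submodule.subset_span ⟨α, ⟨hα, hd⟩, rfl⟩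

lemma spanB_mono (B : Set (Fin n →₀ ℕ)) : Monotone (spanB B) :=
  fun _ _ h => Submodule.span_mono (Set.image_mono fun _ hα => ⟨hα.1, hα.2.trans h⟩)

lemma mem_FSpan {f : PolyR n} (hf : f ∈ F) (hd : f.totalDegree ≤ d) : f ∈ FSpan F d :=
  Submodule.subset_span ⟨f, hf, 0, hd, by simpa [degOf_eq_degree] using hd, by simp⟩

lemma FSpan_mono (F : Finset (PolyR n)) : Monotone (FSpan F) :=
  fun _ _ h => Submodule.span_mono fun _ ⟨f, hf, α, hfd, hαd, hp⟩ =>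
    ⟨f, hf, α, hfd.trans h, hαd.trans h, hp⟩

lemma restrictTotalDegree_zero_le_spanB (hB : 0 ∈ B) :
    restrictTotalDegree (Fin n) ℝ 0 ≤ spanB B 0 := by
  intro p hp
  rw [mem_restrictTotalDegree] at hp
  refine mem_spanB_iff.2 ⟨fun α hα => ?_, hp⟩
  have hα0 : α.degree = 0 := Nat.le_zero.1 ((le_totalDegree hα).trans hp)
  rwa [(Finsupp.degree_eq_zero_iff α).1 hα0]

lemma prolong_spanB_le (B : Set (Fin n →₀ ℕ)) (d : ℕ) :
    prolong (spanB B d) ≤ spanB (Bplus B) (d + 1) := by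
  refine prolong_span_le_iff.2 ⟨?_, ?_⟩
  · rintro _ ⟨α, ⟨hα, hd⟩, rfl⟩
    exact monomial_mem_spanB (Or.inl hα) (Nat.le_succ_of_le hd)
  · rintro i _ ⟨α, ⟨hα, hd⟩, rfl⟩
    have hmem : α + Finsupp.single i 1 ∈ Bplus B := Or.inr (Set.mem_iUnion.2 ⟨i, α, hα, rfl⟩)
    have hdeg : degOf (α + Finsupp.single i 1) ≤ d + 1 := by
      rwa [degOf_add_single, Nat.add_le_add_iff_right]
    simpa [monomial_add_single, mul_comm] using monomial_mem_spanB hmem hdeg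

lemma prolong_FSpan_le (F : Finset (PolyR n)) (d : ℕ) :
    prolong (FSpan F d) ≤ FSpan F (d + 1) := by
  refine prolong_span_le_iff.2 ⟨Submodule.span_le.1 (FSpan_mono F d.le_succ), ?_⟩
  rintro i _ ⟨f, hf, α, hfd, hαd, rfl⟩
  refine Submodule.subset_span ⟨f, hf, α + Finsupp.single i 1, Nat.le_succ_of_le hfd, ?_, ?_⟩
  · rw [degOf_add_single]
    omega
  · rw [monomial_add_single, pow_one]
    ring

end Spans

section BorderBasis

variable {n t d : ℕ} {B : Set (Fin n →₀ ℕ)} {F : Finset (PolyR n)}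

lemma monomial_sub_mem_spanB {f : PolyR n} {γ : Fin n →₀ ℕ}
    (hsupp : ↑f.support ⊆ Bplus B) (huniq : ∀ α ∈ f.support, α ∈ BBorder B → α = γ)
    (hγ : coeff γ f = 1) (hd : f.totalDegree ≤ d) : monomial γ 1 - f ∈ spanB B d := by
  have hγf : γ ∈ f.support := by simp [hγ]
  have hdeg : (monomial γ (1 : ℝ)).totalDegree ≤ d :=
    (totalDegree_monomial γ one_ne_zero).trans_le ((le_totalDegree hγf).trans hd)
  refine mem_spanB_iff.2 ⟨fun α hα => ?_, (totalDegree_sub _ _).trans (max_le hdeg hd)⟩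
  rw [Finset.mem_coe, mem_support_iff, coeff_sub, coeff_monomial] at hα
  have hne : γ ≠ α := by
    rintro rfl
    simp [hγ] at hα
  have hαf : α ∈ f.support := by simpa [hne] using hα
  by_contra hαB
  exact hne (huniq α hαf ⟨hsupp hαf, hαB⟩).symm

lemma zero_notMem_Bplus (hB : 0 ∉ B) : 0 ∉ Bplus B := by
  rintro (h | h)
  · exact hB h
  · obtain ⟨i, β, -, hβ⟩ := Set.mem_iUnion.1 h
    simpa [degOf_eq_degree] using (degOf_add_single β i).symm.trans (congrArg degOf hβ)

lemma IsBorderBasis.zero_mem (hF : IsBorderBasis B F t) : 0 ∈ B := by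
  obtain ⟨hshape, -, -, -, hspan⟩ := hF
  by_contra hB
  let I : Submodule ℝ (PolyR n) := (RingHom.ker (constantCoeff (R := ℝ))).restrictScalars ℝ
  have mem_I {C : Set (Fin n →₀ ℕ)} (hC : 0 ∉ C) {p : PolyR n} (hp : ↑p.support ⊆ C) : p ∈ I :=
    notMem_support_iff.1 fun h => hC (hp h)
  have hBI : spanB B t ≤ I := fun p hp => mem_I hB (mem_spanB_iff.1 hp).1
  have hFI : FSpan F t ≤ I := by
    refine Submodule.span_le.2 ?_
    rintro _ ⟨f, hf, α, hft, -, rfl⟩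
    exact Ideal.mul_mem_left _ _ (mem_I (zero_notMem_Bplus hB) (hshape f hf hft).1)
  have h1 : (1 : PolyR n) ∈ restrictTotalDegree (Fin n) ℝ t :=
    (mem_restrictTotalDegree _ _ _).2 (totalDegree_one.trans_le t.zero_le)
  have h1I : (1 : PolyR n) ∈ I := sup_le hBI hFI (hspan ▸ h1)
  exact one_ne_zero ((map_one constantCoeff).symm.trans h1I)

lemma IsGradedBorderBasis.spanB_Bplus_le (hF : IsGradedBorderBasis B F t) (hd : d ≤ t) :
    spanB (Bplus B) d ≤ spanB B d ⊔ FSpan F d := by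
  obtain ⟨⟨hshape, -, hcover, -⟩, hgraded⟩ := hF
  refine Submodule.span_le.2 ?_
  rintro _ ⟨α, ⟨hα, hαd⟩, rfl⟩
  by_cases hαB : α ∈ B
  · exact Submodule.mem_sup_left (monomial_mem_spanB hαB hαd)
  have hαborder : α ∈ BBorder B := ⟨hα, hαB⟩
  obtain ⟨f, hf, hft, hαf⟩ := hcover α hαborder (hαd.trans hd)
  obtain ⟨hsupp, huniq, hcoeff⟩ := hshape f hf hft
  have hfd : f.totalDegree ≤ d := (hgraded f hf α hαf hαborder).symm.trans_le hαd
  have htail : monomial α 1 - f ∈ spanB B d :=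
    monomial_sub_mem_spanB hsupp (fun β hβ hβB => huniq.unique ⟨hβ, hβB⟩ ⟨hαf, hαborder⟩)
      (hcoeff α hαf hαborder) hfd
  simpa using Submodule.add_mem_sup htail (mem_FSpan hf hfd)

theorem IsGradedBorderBasis.restrictTotalDegree_le_spanB_sup_FSpan
    (hF : IsGradedBorderBasis B F t) (hd : d ≤ t) :
    restrictTotalDegree (Fin n) ℝ d ≤ spanB B d ⊔ FSpan F d := by
  induction d with
  | zero => exact (restrictTotalDegree_zero_le_spanB hF.1.zero_mem).trans le_sup_left
  | succ d ih =>
    calc restrictTotalDegree (Fin n) ℝ (d + 1)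
        ≤ prolong (restrictTotalDegree (Fin n) ℝ d) := restrictTotalDegree_succ_le_prolong n d
      _ ≤ prolong (spanB B d ⊔ FSpan F d) := prolong_mono (ih (Nat.le_of_succ_le hd))
      _ ≤ prolong (spanB B d) ⊔ prolong (FSpan F d) := prolong_sup_le _ _
      _ ≤ spanB (Bplus B) (d + 1) ⊔ FSpan F (d + 1) :=
        sup_le_sup (prolong_spanB_le B d) (prolong_FSpan_le F d)
      _ ≤ spanB B (d + 1) ⊔ FSpan F (d + 1) := sup_le (hF.spanB_Bplus_le hd) le_sup_right

end BorderBasis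

theorem statement_6_general {n t : ℕ} {B : Set (Fin n →₀ ℕ)} {F : Finset (PolyR n)}
    (hF : IsGradedBorderBasis B F t) {p b : PolyR n}
    (hp : p.totalDegree ≤ t) (hb : b ∈ spanB B t) (hpb : p - b ∈ FSpan F t) :
    b.totalDegree ≤ p.totalDegree := by
  obtain ⟨c, hc, q, hq, hcq⟩ := Submodule.mem_sup.1
    (hF.restrictTotalDegree_le_spanB_sup_FSpan hp ((mem_restrictTotalDegree _ _ p).2 le_rfl))
  have hbc : b - c ∈ FSpan F t := by
    have hqpb : q - (p - b) = b - c := by rw [← hcq]; ring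
    exact hqpb ▸ sub_mem (FSpan_mono F hp hq) hpb
  obtain ⟨-, -, -, hdisj, -⟩ := hF.1
  have hb_eq : b = c :=
    sub_eq_zero.1 (Submodule.disjoint_def.1 hdisj _ (sub_mem hb (spanB_mono B hp hc)) hbc)
  rw [hb_eq]
  exact (mem_spanB_iff.1 hc).2

theorem statement_6 {n t : ℕ} (B : Set (Fin n →₀ ℕ)) (hB : MonConnectedTo1 B)
    (F : Finset (PolyR n)) (hF : IsGradedBorderBasis B F t) :
    ∀ α : Fin n →₀ ℕ, degOf α ≤ t → ∀ b ∈ spanB B t,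
      (monomial α (1 : ℝ) : PolyR n) - b ∈ FSpan F t →
      b.totalDegree ≤ degOf α := by
  intro α hα b hb hbF
  have hdeg : (monomial α (1 : ℝ)).totalDegree = degOf α := totalDegree_monomial α one_ne_zero
  exact hdeg ▸ statement_6_general hF (hdeg.trans_le hα) hb hbF

end
end

section
/- Let E ⊂ R[x] be a finite-dimensional linear subspace with 1 ∈ E, V ⊆ E a subspace, and G = (G⁰, G⁺) a set of constraints with G⁰·V ⊆ span(E·E) and G⁺·V·V ⊆ span(E·E). Let Λ ∈ L_{E,G}, and suppose there are distinct points ξ₁,…,ξ_r ∈ ℝⁿ and weights ω₁,…,ω_r > 0 with Λ(p) = Σ_{i=1}^r ω_i p(ξ_i) for all p ∈ span(E·E), together with polynomials b₁,…,b_r ∈ V satisfying b_i(ξ_j) = 1 if i = j and b_i(ξ_j) = 0 otherwise. Then for every i: g(ξ_i) = 0 for all g ∈ G⁰ and h(ξ_i) ≥ 0 for all h ∈ G⁺; that is, ξ_i ∈ S(G). -/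
open MvPolynomial

noncomputable section

/-! Multiplying a constraint by a polynomial of `E` (or its square) that vanishes at every atom but
`ξ i` isolates that atom, so the sign of `Λ` on `Q_{E,G}` determines the sign of the constraint at
`ξ i`. Equality constraints vanish there because `E` is closed under negation. -/

lemma sum_mul_eval_mul_eq_of_eval_eq_zero {R σ ι : Type*} [CommSemiring R] [Fintype ι]
    {ξ : ι → σ → R} {i : ι} {p : MvPolynomial σ R} (hp : ∀ j ≠ i, eval (ξ j) p = 0)
    (ω : ι → R) (g : MvPolynomial σ R) :
    ∑ j, ω j * eval (ξ j) (g * p) = ω i * (eval (ξ i) g * eval (ξ i) p) := by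
  rw [Fintype.sum_eq_single i fun j hj => by rw [eval_mul, hp j hj, mul_zero, mul_zero], eval_mul]

section QMod

variable {n : ℕ} {E : Submodule ℝ (PolyR n)} {G0 G1 : Set (PolyR n)} {g p : PolyR n}

lemma sq_mem_SoS (hp : p ∈ E) : p ^ 2 ∈ SoS E :=
  AddSubmonoid.subset_closure ⟨p, hp, rfl⟩

lemma mul_mem_QMod_of_mem (hg : g ∈ G0) (hp : p ∈ E) (hgp : g * p ∈ spanEE E) :
    g * p ∈ QMod E G0 G1 :=
  ⟨{g}, ∅, fun _ => p, 0, by simpa using hg, by simp, by simp [hp, hgp], by simp, by simp⟩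

lemma mul_mem_QMod_of_mem_SoS (hg : g ∈ G1) (hp : p ∈ SoS E) (hgp : g * p ∈ spanEE E) :
    g * p ∈ QMod E G0 G1 :=
  ⟨∅, {g}, 0, fun _ => p, by simp, by simpa using hg, by simp, by simp [hp, hgp], by simp⟩

lemma apply_mul_eq_zero_of_nonneg_on_QMod {Λ : ↥(spanEE E) →ₗ[ℝ] ℝ}
    (hΛ : ∀ q : ↥(spanEE E), (q : PolyR n) ∈ QMod E G0 G1 → 0 ≤ Λ q)
    (hg : g ∈ G0) (hp : p ∈ E) (hgp : g * p ∈ spanEE E) : Λ ⟨g * p, hgp⟩ = 0 := by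
  have hnonneg : 0 ≤ Λ ⟨g * p, hgp⟩ := hΛ _ (mul_mem_QMod_of_mem hg hp hgp)
  have hneg_mem : -(g * p) ∈ QMod E G0 G1 := by
    rw [← mul_neg]
    exact mul_mem_QMod_of_mem hg (E.neg_mem hp) (by simpa only [mul_neg, neg_mem_iff] using hgp)
  have hneg_nonneg : 0 ≤ -Λ ⟨g * p, hgp⟩ := by
    rw [← map_neg]
    exact hΛ _ hneg_mem
  exact le_antisymm (neg_nonneg.mp hneg_nonneg) hnonneg

end QMod

theorem statement_14_general {n : ℕ} {ι : Type*} [Fintype ι] {E : Submodule ℝ (PolyR n)}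
    {G0 G1 : Set (PolyR n)} {Λ : ↥(spanEE E) →ₗ[ℝ] ℝ}
    (hΛ : ∀ q : ↥(spanEE E), (q : PolyR n) ∈ QMod E G0 G1 → 0 ≤ Λ q)
    {ξ : ι → Fin n → ℝ} {ω : ι → ℝ}
    (hrep : ∀ q : ↥(spanEE E), Λ q = ∑ j, ω j * eval (ξ j) (q : PolyR n))
    {i : ι} (hω : 0 < ω i) {p : PolyR n} (hp : p ∈ E)
    (hne : eval (ξ i) p ≠ 0) (hzero : ∀ j ≠ i, eval (ξ j) p = 0)
    (hG0p : ∀ g ∈ G0, g * p ∈ spanEE E) (hG1p : ∀ g ∈ G1, g * p ^ 2 ∈ spanEE E) :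
    ξ i ∈ SemiSet G0 G1 := by
  refine ⟨fun g hg => ?_, fun g hg => ?_⟩
  · have hatom : ω i * (eval (ξ i) g * eval (ξ i) p) = 0 := by
      rw [← sum_mul_eval_mul_eq_of_eval_eq_zero hzero, ← hrep ⟨g * p, hG0p g hg⟩]
      exact apply_mul_eq_zero_of_nonneg_on_QMod hΛ hg hp _
    simpa only [mul_eq_zero, hω.ne', hne, false_or, or_false] using hatom
  · have hzero_sq : ∀ j ≠ i, eval (ξ j) (p ^ 2) = 0 := fun j hj => by
      rw [eval_pow, hzero j hj, zero_pow two_ne_zero]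
    have hatom : 0 ≤ ω i * (eval (ξ i) g * eval (ξ i) (p ^ 2)) := by
      rw [← sum_mul_eval_mul_eq_of_eval_eq_zero hzero_sq, ← hrep ⟨g * p ^ 2, hG1p g hg⟩]
      exact hΛ _ (mul_mem_QMod_of_mem_SoS hg (sq_mem_SoS hp) (hG1p g hg))
    have hsq_pos : 0 < eval (ξ i) (p ^ 2) := by
      rw [eval_pow]
      exact sq_pos_of_ne_zero hne
    exact nonneg_of_mul_nonneg_left (nonneg_of_mul_nonneg_right hatom hω) hsq_pos

theorem statement_14 {n r : ℕ} (E V : Submodule ℝ (PolyR n))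
    (hEfin : FiniteDimensional ℝ ↥E) (h1 : (1 : PolyR n) ∈ E) (hVE : V ≤ E)
    (G0 G1 : Set (PolyR n)) (hG0 : G0.Finite) (hG1 : G1.Finite)
    (hG0V : ∀ g ∈ G0, ∀ v ∈ V, g * v ∈ spanEE E)
    (hG1V : ∀ g ∈ G1, ∀ v ∈ V, ∀ w ∈ V, g * v * w ∈ spanEE E)
    (Λ : ↥(spanEE E) →ₗ[ℝ] ℝ) (hmem : Λ ∈ LSet E G0 G1)
    (ξ : Fin r → (Fin n → ℝ)) (hinj : Function.Injective ξ)
    (ω : Fin r → ℝ) (hω : ∀ i, 0 < ω i)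
    (hrep : ∀ p : ↥(spanEE E), Λ p = ∑ i, ω i * eval (ξ i) (p : PolyR n))
    (b : Fin r → PolyR n) (hb : ∀ i, b i ∈ V)
    (hinterp : ∀ i j, eval (ξ j) (b i) = if i = j then (1 : ℝ) else 0) :
    ∀ i, ξ i ∈ SemiSet G0 G1 := by
  intro i
  exact statement_14_general hmem.1 hrep (hω i) (hVE (hb i)) (by simp [hinterp])
    (fun j hj => by simp [hinterp, hj.symm]) (fun g hg => hG0V g hg _ (hb i))
    (fun g hg => by simpa only [sq, mul_assoc] using hG1V g hg _ (hb i) _ (hb i))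

end
end
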